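/- Let d ≥ 1 and let s ≥ 1 be an integer. There exists a constant C > 0, depending only on s and d, such that for all smooth functions f, g : ℝ^d → ℝ and every multi-index α with |α| ≤ s, sup_{x ∈ ℝ^d} ‖D^α(fg) − f · D^α g‖_{L²(B_1(x))} ≤ C ( (‖f‖_{L^∞} + ‖∇f‖_{L^∞}) · ∑_{|β| ≤ s−1} sup_{x} ‖D^β g‖_{L²(B_1(x))} + ‖g‖_{L^∞} · ∑_{|β| ≤ s} sup_{x} ‖D^β f‖_{L²(B_1(x))} ) (an inequality of extended nonnegative reals). -/

import Mathlib

open MeasureTheory Metric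
open scoped ENNReal

noncomputable section

/-- The partial derivative in the `i`-th coordinate direction. -/
def pd {d : ℕ} {F : Type*} [NormedAddCommGroup F] [NormedSpace ℝ F]
    (i : Fin d) (f : EuclideanSpace ℝ (Fin d) → F) : EuclideanSpace ℝ (Fin d) → F :=
  fun x => fderiv ℝ f x (EuclideanSpace.single i 1)

/-- The partial derivative `D^α` associated with a multi-index `α`. -/
def Dm {d : ℕ} {F : Type*} [NormedAddCommGroup F] [NormedSpace ℝ F]
    (α : Fin d → ℕ) (f : EuclideanSpace ℝ (Fin d) → F) : EuclideanSpace ℝ (Fin d) → F :=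
  (List.finRange d).foldr (fun i g => (pd i)^[α i] g) f

/-- The finite set of multi-indices `α` on `ℝ^d` with `|α| ≤ s`. -/
def mSet (d s : ℕ) : Finset (Fin d → ℕ) :=
  (Finset.Iic (fun _ => s : Fin d → ℕ)).filter fun α => (∑ i, α i) ≤ s

/-- The uniformly local Sobolev norm
`‖f‖_{H^s_ul} = ∑_{|α| ≤ s} sup_x ‖D^α f‖_{L²(B₁(x))}`. -/
def ulSobolev (d s : ℕ) {F : Type*} [NormedAddCommGroup F] [NormedSpace ℝ F]
    (f : EuclideanSpace ℝ (Fin d) → F) : ℝ≥0∞ :=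
  ∑ α ∈ mSet d s, ⨆ x : EuclideanSpace ℝ (Fin d),
    eLpNorm (Dm α f) 2 (volume.restrict (ball x 1))

/-!
By the Leibniz rule, the commutator is a sum of terms `D^p f · D^q g` with `|p| + |q| = |α|` and
`p ≠ 0`, so one derivative of `f` can be split off and `D^p f = D^{p'} (∂_i f)` with
`|p'| + |q| = k := |α| - 1`. It remains to prove the Moser product estimate for `v = ∂_i f` and
`w = g`, `‖D^{p'} v · D^q w‖_{L²} ≲ ‖v‖_∞ ‖D^k w‖_{L²} + ‖D^k v‖_{L²} ‖w‖_∞`. As derivatives are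
local, `v` and `w` may be multiplied by a cutoff at the ball in question, hence be taken compactly
supported.

Let `N_j(v)` be the largest `L^{2k/j}` norm of a derivative of `v` of order `j`. Integrating
`|∂u|^p` by parts, with `p = 2k/(j+1)`, and applying Hölder's inequality gives the
Gagliardo–Nirenberg step `N_{j+1}² ≤ 2k N_j N_{j+2}`. Hence `j ↦ N_j(v) N_{k-j}(w)`, which by
Hölder's inequality controls the product, is log-convex up to a constant, and so is bounded by its
values at `j = 0` and `j = k`.
-/

open Set
open scoped NNReal

section WordDerivatives

variable {d : ℕ} {F G H : Type*} [NormedAddCommGroup F] [NormedSpace ℝ F]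
  [NormedAddCommGroup G] [NormedSpace ℝ G] [NormedAddCommGroup H] [NormedSpace ℝ H]
  {f f₁ f₂ : EuclideanSpace ℝ (Fin d) → F} {g : EuclideanSpace ℝ (Fin d) → G}

lemma contDiff_pd {m n : WithTop ℕ∞} (hf : ContDiff ℝ n f) (hmn : m + 1 ≤ n) (i : Fin d) :
    ContDiff ℝ m (pd i f) :=
  (hf.fderiv_right hmn).clm_apply contDiff_const

lemma pd_comm (hf : ContDiff ℝ 2 f) (i j : Fin d) : pd i (pd j f) = pd j (pd i f) := by
  have hdiff : Differentiable ℝ (fderiv ℝ f) :=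
    (hf.fderiv_right (m := 1) (by norm_num)).differentiable one_ne_zero
  have pd_pd (i j : Fin d) (x : EuclideanSpace ℝ (Fin d)) : pd i (pd j f) x =
      fderiv ℝ (fderiv ℝ f) x (EuclideanSpace.single i 1) (EuclideanSpace.single j 1) := by
    change fderiv ℝ (fun y => fderiv ℝ f y (EuclideanSpace.single j 1)) x _ = _
    simp [fderiv_clm_apply (hdiff x) (differentiableAt_const _)]
  funext x
  rw [pd_pd, pd_pd]
  exact hf.contDiffAt.isSymmSndFDerivAt (by simp) _ _

lemma pd_add (hf₁ : Differentiable ℝ f₁) (hf₂ : Differentiable ℝ f₂) (i : Fin d) :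
    pd i (f₁ + f₂) = pd i f₁ + pd i f₂ := by
  funext x
  simp [pd, fderiv_add (hf₁ x) (hf₂ x)]

lemma pd_bilin (B : F →L[ℝ] G →L[ℝ] H) (hf : Differentiable ℝ f) (hg : Differentiable ℝ g)
    (i : Fin d) : pd i (fun x => B (f x) (g x)) =
      (fun x => B (pd i f x) (g x)) + fun x => B (f x) (pd i g x) := by
  funext x
  simp [pd, B.fderiv_of_bilinear (hf x) (hg x), add_comm]

/-- The iterated partial derivative along a word of coordinate directions, the head of the word
being applied first. Words, unlike multi-indices, lend themselves to induction. -/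
def wordDeriv (l : List (Fin d)) (f : EuclideanSpace ℝ (Fin d) → F) :
    EuclideanSpace ℝ (Fin d) → F :=
  l.foldl (fun u i => pd i u) f

@[simp] lemma wordDeriv_nil (f : EuclideanSpace ℝ (Fin d) → F) : wordDeriv [] f = f := rfl

@[simp] lemma wordDeriv_cons (i : Fin d) (l : List (Fin d)) (f : EuclideanSpace ℝ (Fin d) → F) :
    wordDeriv (i :: l) f = wordDeriv l (pd i f) := rfl

@[simp] lemma wordDeriv_append (l m : List (Fin d)) (f : EuclideanSpace ℝ (Fin d) → F) :
    wordDeriv (l ++ m) f = wordDeriv m (wordDeriv l f) :=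
  List.foldl_append

lemma contDiff_wordDeriv {m n : ℕ} (hf : ContDiff ℝ n f) {l : List (Fin d)}
    (h : m + l.length ≤ n) : ContDiff ℝ m (wordDeriv l f) := by
  induction l generalizing f n with
  | nil => exact hf.of_le (by exact_mod_cast h)
  | cons i l ih =>
    rw [List.length_cons] at h
    exact ih (contDiff_pd (m := (m + l.length : ℕ)) hf (by exact_mod_cast h) i) le_rfl

lemma continuous_wordDeriv {n : ℕ} (hf : ContDiff ℝ n f) {l : List (Fin d)}
    (h : l.length ≤ n) : Continuous (wordDeriv l f) :=
  (contDiff_wordDeriv (m := 0) hf (by omega)).continuous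

lemma tsupport_wordDeriv_subset (l : List (Fin d)) (f : EuclideanSpace ℝ (Fin d) → F) :
    tsupport (wordDeriv l f) ⊆ tsupport f := by
  induction l generalizing f with
  | nil => exact subset_rfl
  | cons i l ih => exact (ih _).trans (tsupport_fderiv_apply_subset ℝ _)

lemma hasCompactSupport_wordDeriv (hf : HasCompactSupport f) (l : List (Fin d)) :
    HasCompactSupport (wordDeriv l f) :=
  hf.of_isClosed_subset (isClosed_tsupport _) (tsupport_wordDeriv_subset l f)

lemma wordDeriv_eqOn {U : Set (EuclideanSpace ℝ (Fin d))} (hU : IsOpen U) (h : EqOn f₁ f₂ U)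
    (l : List (Fin d)) : EqOn (wordDeriv l f₁) (wordDeriv l f₂) U := by
  induction l generalizing f₁ f₂ with
  | nil => exact h
  | cons i _ ih =>
    refine ih fun x hx => ?_
    simp only [pd, (h.eventuallyEq_of_mem (hU.mem_nhds hx)).fderiv_eq]

lemma wordDeriv_comp_sub (f : EuclideanSpace ℝ (Fin d) → F) (a : EuclideanSpace ℝ (Fin d))
    (l : List (Fin d)) : wordDeriv l (fun y => f (y - a)) = fun y => wordDeriv l f (y - a) := by
  induction l generalizing f with
  | nil => rfl
  | cons i l ih =>
    have hpd : pd i (fun y => f (y - a)) = fun y => pd i f (y - a) := by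
      funext y
      simp only [pd, fderiv_comp_sub]
    rw [wordDeriv_cons, hpd, ih, wordDeriv_cons]

lemma wordDeriv_add {l : List (Fin d)} (hf₁ : ContDiff ℝ l.length f₁)
    (hf₂ : ContDiff ℝ l.length f₂) :
    wordDeriv l (f₁ + f₂) = wordDeriv l f₁ + wordDeriv l f₂ := by
  induction l generalizing f₁ f₂ with
  | nil => rfl
  | cons i l ih =>
    rw [List.length_cons, Nat.cast_add_one] at hf₁ hf₂
    rw [wordDeriv_cons, pd_add (hf₁.differentiable (by simp)) (hf₂.differentiable (by simp)),
      ih (contDiff_pd hf₁ le_rfl i) (contDiff_pd hf₂ le_rfl i)]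
    rfl

lemma wordDeriv_perm {l m : List (Fin d)} (h : l.Perm m) (hf : ContDiff ℝ l.length f) :
    wordDeriv l f = wordDeriv m f := by
  induction h generalizing f with
  | nil => rfl
  | cons i _ ih => exact ih (contDiff_pd hf (by simp) i)
  | swap i j _ =>
    rw [wordDeriv_cons, wordDeriv_cons,
      pd_comm (hf.of_le (by simp only [List.length_cons]; exact_mod_cast (by omega))),
      wordDeriv_cons, wordDeriv_cons]
  | trans h₁ _ ih₁ ih₂ => exact (ih₁ hf).trans (ih₂ (h₁.length_eq ▸ hf))

/-- The word along which `D^α` differentiates, in which each letter `i` occurs `α i` times. -/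
def multiWord (α : Fin d → ℕ) : List (Fin d) :=
  ((List.finRange d).flatMap fun i => List.replicate (α i) i).reverse

lemma Dm_eq_wordDeriv (α : Fin d → ℕ) (f : EuclideanSpace ℝ (Fin d) → F) :
    Dm α f = wordDeriv (multiWord α) f := by
  have foldr_replicate (i : Fin d) (n : ℕ) (u : EuclideanSpace ℝ (Fin d) → F) :
      (List.replicate n i).foldr pd u = (pd i)^[n] u := by
    induction n with
    | zero => rfl
    | succ n ih => rw [List.replicate_succ, List.foldr_cons, ih, Function.iterate_succ_apply']
  simp [Dm, wordDeriv, multiWord, List.foldr_flatMap, foldr_replicate]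

lemma count_multiWord (α : Fin d → ℕ) (i : Fin d) : (multiWord α).count i = α i := by
  simp [multiWord, List.count_flatMap, ← List.ofFn_eq_map, List.sum_ofFn, Function.comp_def,
    List.count_replicate]

lemma length_multiWord (α : Fin d → ℕ) : (multiWord α).length = ∑ i, α i := by
  simp [multiWord, List.length_flatMap, ← List.ofFn_eq_map, List.sum_ofFn]

lemma exists_Dm_eq_wordDeriv {l : List (Fin d)} (hf : ContDiff ℝ l.length f) :
    ∃ α : Fin d → ℕ, ∑ i, α i = l.length ∧ Dm α f = wordDeriv l f := by
  have hperm : l.Perm (multiWord fun i => l.count i) :=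
    List.perm_iff_count.2 fun i => by rw [count_multiWord]
  exact ⟨fun i => l.count i, (length_multiWord _).symm.trans hperm.length_eq.symm,
    (Dm_eq_wordDeriv _ _).trans (wordDeriv_perm hperm hf).symm⟩

end WordDerivatives

section Leibniz

variable {d : ℕ} {F G H : Type*} [NormedAddCommGroup F] [NormedSpace ℝ F]
  [NormedAddCommGroup G] [NormedSpace ℝ G] [NormedAddCommGroup H] [NormedSpace ℝ H]
  {f : EuclideanSpace ℝ (Fin d) → F} {g : EuclideanSpace ℝ (Fin d) → G}
  {μ : Measure (EuclideanSpace ℝ (Fin d))} {r A : ℝ≥0∞}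

lemma contDiff_bilin (B : F →L[ℝ] G →L[ℝ] H) {n : WithTop ℕ∞} (hf : ContDiff ℝ n f)
    (hg : ContDiff ℝ n g) : ContDiff ℝ n fun x => B (f x) (g x) :=
  (B.contDiff.comp hf).clm_apply hg

lemma wordDeriv_cons_bilin (B : F →L[ℝ] G →L[ℝ] H) (i : Fin d) {l : List (Fin d)}
    (hf : ContDiff ℝ (i :: l).length f) (hg : ContDiff ℝ (i :: l).length g) :
    wordDeriv (i :: l) (fun y => B (f y) (g y)) =
      wordDeriv l (fun y => B (pd i f y) (g y)) + wordDeriv l fun y => B (f y) (pd i g y) := by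
  rw [List.length_cons, Nat.cast_add_one] at hf hg
  rw [wordDeriv_cons, pd_bilin B (hf.differentiable (by simp)) (hg.differentiable (by simp)),
    wordDeriv_add (contDiff_bilin B (contDiff_pd hf le_rfl i) (hg.of_le le_self_add))
      (contDiff_bilin B (hf.of_le le_self_add) (contDiff_pd hg le_rfl i))]

lemma eLpNorm_wordDeriv_bilin_le (B : F →L[ℝ] G →L[ℝ] H) (hr : 1 ≤ r) {l : List (Fin d)}
    (hf : ContDiff ℝ l.length f) (hg : ContDiff ℝ l.length g)
    (hA : ∀ p q : List (Fin d), p.length + q.length = l.length →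
      eLpNorm (fun y => B (wordDeriv p f y) (wordDeriv q g y)) r μ ≤ A) :
    eLpNorm (wordDeriv l fun y => B (f y) (g y)) r μ ≤ 2 ^ l.length * A := by
  induction l generalizing f g with
  | nil => simpa using hA [] [] rfl
  | cons i l ih =>
    have hf' : ContDiff ℝ l.length (pd i f) := contDiff_pd hf (by simp) i
    have hg' : ContDiff ℝ l.length (pd i g) := contDiff_pd hg (by simp) i
    have hf₀ : ContDiff ℝ l.length f := hf.of_le (by simp)
    have hg₀ : ContDiff ℝ l.length g := hg.of_le (by simp)
    rw [wordDeriv_cons_bilin B i hf hg, List.length_cons, pow_succ, mul_two, add_mul]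
    refine (eLpNorm_add_le
      (continuous_wordDeriv (contDiff_bilin B hf' hg₀) le_rfl).aestronglyMeasurable
      (continuous_wordDeriv (contDiff_bilin B hf₀ hg') le_rfl).aestronglyMeasurable hr).trans ?_
    gcongr
    · exact ih hf' hg₀ fun p q h => hA (i :: p) q (by simp; omega)
    · exact ih hf₀ hg' fun p q h => hA p (i :: q) (by simp; omega)

lemma eLpNorm_wordDeriv_bilin_sub_le (B : F →L[ℝ] G →L[ℝ] H) (hr : 1 ≤ r) {l : List (Fin d)}
    (hf : ContDiff ℝ l.length f) (hg : ContDiff ℝ l.length g)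
    (hA : ∀ p q : List (Fin d), p ≠ [] → p.length + q.length = l.length →
      eLpNorm (fun y => B (wordDeriv p f y) (wordDeriv q g y)) r μ ≤ A) :
    eLpNorm (fun y => wordDeriv l (fun z => B (f z) (g z)) y - B (f y) (wordDeriv l g y)) r μ ≤
      2 ^ l.length * A := by
  induction l generalizing f g with
  | nil => simp
  | cons i l ih =>
    have hf' : ContDiff ℝ l.length (pd i f) := contDiff_pd hf (by simp) i
    have hg' : ContDiff ℝ l.length (pd i g) := contDiff_pd hg (by simp) i
    have hf₀ : ContDiff ℝ l.length f := hf.of_le (by simp)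
    have hg₀ : ContDiff ℝ l.length g := hg.of_le (by simp)
    have hsplit : (fun y => wordDeriv (i :: l) (fun z => B (f z) (g z)) y -
        B (f y) (wordDeriv (i :: l) g y)) = wordDeriv l (fun z => B (pd i f z) (g z)) +
          fun y => wordDeriv l (fun z => B (f z) (pd i g z)) y -
            B (f y) (wordDeriv l (pd i g) y) := by
      rw [wordDeriv_cons_bilin B i hf hg]
      funext y
      simp only [Pi.add_apply, wordDeriv_cons, add_sub_assoc]
    have hcont : Continuous fun y => wordDeriv l (fun z => B (f z) (pd i g z)) y -
        B (f y) (wordDeriv l (pd i g) y) :=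
      (continuous_wordDeriv (contDiff_bilin B hf₀ hg') le_rfl).sub
        ((B.continuous.comp hf.continuous).clm_apply (continuous_wordDeriv hg' le_rfl))
    rw [hsplit, List.length_cons, pow_succ, mul_two, add_mul]
    refine (eLpNorm_add_le
      (continuous_wordDeriv (contDiff_bilin B hf' hg₀) le_rfl).aestronglyMeasurable
      hcont.aestronglyMeasurable hr).trans ?_
    gcongr
    · exact eLpNorm_wordDeriv_bilin_le B hr hf' hg₀ fun p q h =>
        hA (i :: p) q (by simp) (by simp; omega)
    · exact ih hf₀ hg' fun p q hp h => hA p (i :: q) hp (by simp; omega)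

end Leibniz

section GagliardoNirenberg

variable {E F : Type*} [NormedAddCommGroup E] [NormedSpace ℝ E] [NormedAddCommGroup F]
  [InnerProductSpace ℝ F]

lemma hasFDerivAt_norm_rpow_smul_self {a : ℝ} (ha : 0 < a) (x : F) :
    HasFDerivAt (fun y : F => ‖y‖ ^ a • y) (‖x‖ ^ a • ContinuousLinearMap.id ℝ F +
      ((a * ‖x‖ ^ (a - 2)) • innerSL ℝ x).smulRight x) x := by
  rcases eq_or_ne x 0 with rfl | hx
  · have hlim : Filter.Tendsto (fun y : F => ‖y‖ ^ a) (nhds 0) (nhds 0) := by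
      have hcont : Continuous fun y : F => ‖y‖ ^ a := continuous_norm.rpow_const fun _ => .inr ha.le
      simpa [Real.zero_rpow ha.ne'] using hcont.tendsto 0
    refine .of_isLittleO ?_
    simpa [Real.zero_rpow ha.ne'] using
      ((Asymptotics.isLittleO_one_iff ℝ).2 hlim).smul_isBigO
        (Asymptotics.isBigO_refl (fun y : F => y) _)
  · have hnorm : HasFDerivAt (fun y : F => ‖y‖ ^ a) ((a * ‖x‖ ^ (a - 2)) • innerSL ℝ x) x := by
      convert! ((hasStrictFDerivAt_norm_sq x).rpow_const (p := a / 2) (by simp [hx])).hasFDerivAt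
        using 0
      simp_rw [← Real.rpow_natCast_mul (norm_nonneg _), ← Nat.cast_smul_eq_nsmul ℝ, smul_smul]
      ring_nf
    exact hnorm.smul (hasFDerivAt_id x)

lemma norm_fderiv_norm_rpow_smul_self_le {a : ℝ} (ha : 0 < a) (x : F) :
    ‖fderiv ℝ (fun y : F => ‖y‖ ^ a • y) x‖ ≤ (a + 1) * ‖x‖ ^ a := by
  rw [(hasFDerivAt_norm_rpow_smul_self ha x).fderiv]
  have hpow : ‖x‖ ^ (a - 2) * (‖x‖ * ‖x‖) ≤ ‖x‖ ^ a := by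
    rcases eq_or_ne x 0 with rfl | hx
    · simp [Real.zero_rpow ha.ne']
    · rw [← sq, ← Real.rpow_natCast, ← Real.rpow_add (norm_pos_iff.2 hx)]
      simp
  calc ‖‖x‖ ^ a • ContinuousLinearMap.id ℝ F + ((a * ‖x‖ ^ (a - 2)) • innerSL ℝ x).smulRight x‖
      ≤ ‖x‖ ^ a * 1 + a * ‖x‖ ^ (a - 2) * ‖x‖ * ‖x‖ := by
        refine (norm_add_le _ _).trans ?_
        rw [norm_smul, ContinuousLinearMap.norm_smulRight_apply, norm_smul, innerSL_apply_norm,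
          Real.norm_of_nonneg (by positivity), Real.norm_of_nonneg (by positivity)]
        gcongr
        exact ContinuousLinearMap.norm_id_le
    _ = ‖x‖ ^ a + a * (‖x‖ ^ (a - 2) * (‖x‖ * ‖x‖)) := by ring
    _ ≤ ‖x‖ ^ a + a * ‖x‖ ^ a := by gcongr
    _ = (a + 1) * ‖x‖ ^ a := by ring

lemma contDiff_norm_rpow_smul_self {a : ℝ} (ha : 0 < a) :
    ContDiff ℝ 1 fun y : F => ‖y‖ ^ a • y := by
  refine contDiff_one_iff_fderiv.2
    ⟨fun x => (hasFDerivAt_norm_rpow_smul_self ha x).differentiableAt,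
      continuous_iff_continuousAt.2 fun x => ?_⟩
  rcases eq_or_ne x 0 with rfl | hx
  · have hzero : fderiv ℝ (fun y : F => ‖y‖ ^ a • y) 0 = 0 := by
      simpa [Real.zero_rpow ha.ne'] using norm_fderiv_norm_rpow_smul_self_le ha (0 : F)
    have hcont : Continuous fun y : F => (a + 1) * ‖y‖ ^ a :=
      continuous_const.mul (continuous_norm.rpow_const fun _ => .inr ha.le)
    rw [ContinuousAt, hzero]
    exact squeeze_zero_norm (norm_fderiv_norm_rpow_smul_self_le ha)
      (by simpa [Real.zero_rpow ha.ne'] using hcont.tendsto 0)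
  · have hcont : ContDiffAt ℝ 1 (fun y : F => ‖y‖ ^ a • y) x :=
      ((contDiffAt_norm ℝ hx).rpow_const_of_ne (norm_ne_zero_iff.2 hx)).smul contDiffAt_id
    exact (hcont.fderiv_right (m := 0) (by norm_num)).continuousAt

lemma norm_fderiv_norm_rpow_smul_le {u : E → F} {x : E} (hu : DifferentiableAt ℝ u x) {a : ℝ}
    (ha : 0 < a) (v : E) :
    ‖fderiv ℝ (fun y => ‖u y‖ ^ a • u y) x v‖ ≤ (a + 1) * ‖u x‖ ^ a * ‖fderiv ℝ u x v‖ := by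
  have hφ := (hasFDerivAt_norm_rpow_smul_self ha (u x)).differentiableAt
  change ‖fderiv ℝ ((fun y : F => ‖y‖ ^ a • y) ∘ u) x v‖ ≤ _
  rw [fderiv_comp x hφ hu]
  exact ContinuousLinearMap.le_of_opNorm_le _ (norm_fderiv_norm_rpow_smul_self_le ha _) _

variable [FiniteDimensional ℝ E] [MeasurableSpace E] [BorelSpace E] {μ : Measure E}
  [μ.IsAddHaarMeasure] {w : E → F}

lemma integral_norm_fderiv_rpow_eq (hw : ContDiff ℝ 2 w) (hc : HasCompactSupport w) (v : E)
    {p : ℝ} (hp : 2 < p) :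
    ∫ x, ‖fderiv ℝ w x v‖ ^ p ∂μ = -∫ x, inner ℝ
      (fderiv ℝ (fun y => ‖fderiv ℝ w y v‖ ^ (p - 2) • fderiv ℝ w y v) x v) (w x) ∂μ := by
  have hu : ContDiff ℝ 1 fun x => fderiv ℝ w x v :=
    (hw.fderiv_right (m := 1) (by norm_num)).clm_apply contDiff_const
  have huc : HasCompactSupport fun x => fderiv ℝ w x v := hc.fderiv_apply ℝ v
  have hφ : ContDiff ℝ 1 fun y => ‖fderiv ℝ w y v‖ ^ (p - 2) • fderiv ℝ w y v :=
    (contDiff_norm_rpow_smul_self (sub_pos.2 hp)).comp hu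
  have hφ' := (hφ.continuous_fderiv one_ne_zero).clm_apply (continuous_const (y := v))
  have hinner (x : E) : inner ℝ (‖fderiv ℝ w x v‖ ^ (p - 2) • fderiv ℝ w x v) (fderiv ℝ w x v) =
      ‖fderiv ℝ w x v‖ ^ p := by
    rw [real_inner_smul_left, real_inner_self_eq_norm_sq, ← Real.rpow_natCast,
      ← Real.rpow_add_of_nonneg (norm_nonneg _) (sub_pos.2 hp).le (by positivity)]
    simp
  simp_rw [← hinner]
  refine integral_bilinear_fderiv_right_eq_neg_left_of_integrable (B := innerSL ℝ) ?_ ?_ ?_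
    (fun x _ => hφ.differentiable one_ne_zero x) fun x _ => hw.differentiable two_ne_zero x
  · exact (hφ'.inner hw.continuous).integrable_of_hasCompactSupport
      (hc.mono fun x hx hwx => hx (by simp [hwx]))
  · exact (hφ.continuous.inner hu.continuous).integrable_of_hasCompactSupport
      (huc.mono fun x hx hux => hx (by simp [hux]))
  · exact (hφ.continuous.inner hw.continuous).integrable_of_hasCompactSupport
      (hc.mono fun x hx hwx => hx (by simp [hwx]))

lemma lintegral_enorm_fderiv_rpow_le (hw : ContDiff ℝ 2 w) (hc : HasCompactSupport w) (v : E)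
    {p : ℝ} (hp : 2 < p) :
    ∫⁻ x, ‖fderiv ℝ w x v‖ₑ ^ p ∂μ ≤ ENNReal.ofReal (p - 1) *
      ∫⁻ x, ‖fderiv ℝ w x v‖ₑ ^ (p - 2) *
        (‖w x‖ₑ * ‖fderiv ℝ (fun y => fderiv ℝ w y v) x v‖ₑ) ∂μ := by
  have hp2 : 0 < p - 2 := sub_pos.2 hp
  have hu : ContDiff ℝ 1 fun x => fderiv ℝ w x v :=
    (hw.fderiv_right (m := 1) (by norm_num)).clm_apply contDiff_const
  have hpow_integrable : Integrable (fun x => ‖fderiv ℝ w x v‖ ^ p) μ :=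
    (hu.continuous.norm.rpow_const fun _ => .inr (by linarith)).integrable_of_hasCompactSupport
      ((hc.fderiv_apply ℝ v).mono fun x hx hux => hx (by
        simp only at hux; simp [hux, Real.zero_rpow (by linarith : p ≠ 0)]))
  calc ∫⁻ x, ‖fderiv ℝ w x v‖ₑ ^ p ∂μ
      = ENNReal.ofReal (∫ x, ‖fderiv ℝ w x v‖ ^ p ∂μ) := by
        rw [ofReal_integral_eq_lintegral_ofReal hpow_integrable
          (.of_forall fun x => by simp only [Pi.zero_apply]; positivity)]
        refine lintegral_congr fun x => ?_
        rw [← ENNReal.ofReal_rpow_of_nonneg (norm_nonneg _) (by linarith), ofReal_norm]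
    _ ≤ ‖∫ x, inner ℝ (fderiv ℝ (fun y => ‖fderiv ℝ w y v‖ ^ (p - 2) • fderiv ℝ w y v) x v)
          (w x) ∂μ‖ₑ := by
        rw [integral_norm_fderiv_rpow_eq hw hc v hp]
        exact (Real.ofReal_le_enorm _).trans_eq (enorm_neg _)
    _ ≤ ∫⁻ x, ENNReal.ofReal (p - 1) * (‖fderiv ℝ w x v‖ₑ ^ (p - 2) *
          (‖w x‖ₑ * ‖fderiv ℝ (fun y => fderiv ℝ w y v) x v‖ₑ)) ∂μ := by
        refine (enorm_integral_le_lintegral_enorm _).trans (lintegral_mono fun x => ?_)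
        simp only [← ofReal_norm]
        rw [ENNReal.ofReal_rpow_of_nonneg (norm_nonneg _) hp2.le,
          ← ENNReal.ofReal_mul (by positivity), ← ENNReal.ofReal_mul (by positivity),
          ← ENNReal.ofReal_mul (by linarith)]
        refine ENNReal.ofReal_le_ofReal ((norm_inner_le_norm _ _).trans ?_)
        calc _ ≤ (p - 2 + 1) * ‖fderiv ℝ w x v‖ ^ (p - 2) *
                ‖fderiv ℝ (fun y => fderiv ℝ w y v) x v‖ * ‖w x‖ := by
              gcongr
              exact norm_fderiv_norm_rpow_smul_le (hu.differentiable one_ne_zero x) hp2 v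
          _ = _ := by ring
    _ = _ := lintegral_const_mul' _ _ ENNReal.ofReal_ne_top

lemma lintegral_enorm_rpow_mul_le {α F₁ F₂ F₃ : Type*} [MeasurableSpace α] {μ : Measure α}
    [NormedAddCommGroup F₁] [NormedAddCommGroup F₂] [NormedAddCommGroup F₃]
    {u₁ : α → F₁} {u₂ : α → F₂} {u₃ : α → F₃} (h₁ : AEStronglyMeasurable u₁ μ)
    (h₂ : AEStronglyMeasurable u₂ μ) (h₃ : AEStronglyMeasurable u₃ μ) {p : ℝ≥0} (hp : 2 < p)
    {q r : ℝ≥0∞} [q.HolderTriple r ((p / 2 : ℝ≥0) : ℝ≥0∞)] :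
    ∫⁻ x, ‖u₁ x‖ₑ ^ ((p : ℝ) - 2) * (‖u₂ x‖ₑ * ‖u₃ x‖ₑ) ∂μ ≤
      eLpNorm u₁ p μ ^ ((p : ℝ) - 2) * (eLpNorm u₂ q μ * eLpNorm u₃ r μ) := by
  have ha : (0 : ℝ) < p - 2 := sub_pos.2 (by exact_mod_cast hp)
  have hconj : (ENNReal.ofReal (p / (p - 2))).HolderTriple ((p / 2 : ℝ≥0) : ℝ≥0∞) 1 := by
    have h : ((p : ℝ) / (p - 2)).HolderConjugate ((p : ℝ) / 2) := by
      rw [Real.holderConjugate_iff]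
      refine ⟨(one_lt_div ha).2 (by linarith), ?_⟩
      field_simp
      ring
    have := h.ennrealOfReal
    rwa [← ENNReal.ofReal_coe_nnreal]
  have hpow : eLpNorm (fun x => ‖u₁ x‖ ^ ((p : ℝ) - 2)) (ENNReal.ofReal (p / (p - 2))) μ =
      eLpNorm u₁ p μ ^ ((p : ℝ) - 2) := by
    rw [eLpNorm_norm_rpow _ ha, ← ENNReal.ofReal_mul (by positivity), div_mul_cancel₀ _ ha.ne',
      ENNReal.ofReal_coe_nnreal]
  calc ∫⁻ x, ‖u₁ x‖ₑ ^ ((p : ℝ) - 2) * (‖u₂ x‖ₑ * ‖u₃ x‖ₑ) ∂μ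
      = eLpNorm ((fun x => ‖u₁ x‖ ^ ((p : ℝ) - 2)) • fun x => ‖u₂ x‖ • ‖u₃ x‖) 1 μ := by
        rw [eLpNorm_one_eq_lintegral_enorm]
        refine lintegral_congr fun x => ?_
        simp [Real.enorm_rpow_of_nonneg, ha.le]
    _ ≤ eLpNorm u₁ p μ ^ ((p : ℝ) - 2) *
          eLpNorm ((fun x => ‖u₂ x‖) • fun x => ‖u₃ x‖) (p / 2 : ℝ≥0) μ := by
        rw [← hpow]
        exact eLpNorm_smul_le_mul_eLpNorm (h₂.norm.smul h₃.norm)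
          (h₁.norm.aemeasurable.pow_const _).aestronglyMeasurable
    _ ≤ _ := by
        gcongr
        refine (eLpNorm_smul_le_mul_eLpNorm (p := q) (q := r) h₃.norm h₂.norm).trans_eq ?_
        rw [eLpNorm_norm, eLpNorm_norm]

lemma eLpNorm_fderiv_sq_le (hw : ContDiff ℝ 2 w) (hc : HasCompactSupport w) (v : E) {p : ℝ≥0}
    (hp : 2 < p) {q r : ℝ≥0∞} [q.HolderTriple r ((p / 2 : ℝ≥0) : ℝ≥0∞)] :
    eLpNorm (fun x => fderiv ℝ w x v) p μ ^ 2 ≤ p * (eLpNorm w q μ *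
      eLpNorm (fun x => fderiv ℝ (fun y => fderiv ℝ w y v) x v) r μ) := by
  have hpR : (2 : ℝ) < p := by exact_mod_cast hp
  have hu : ContDiff ℝ 1 fun x => fderiv ℝ w x v :=
    (hw.fderiv_right (m := 1) (by norm_num)).clm_apply contDiff_const
  have hu' : Continuous fun x => fderiv ℝ (fun y => fderiv ℝ w y v) x v :=
    (hu.continuous_fderiv one_ne_zero).clm_apply continuous_const
  set u := fun x => fderiv ℝ w x v
  set u' := fun x => fderiv ℝ u x v
  have htop : eLpNorm u p μ ≠ ⊤ :=
    (hu.continuous.memLp_of_hasCompactSupport (hc.fderiv_apply ℝ v)).eLpNorm_ne_top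
  rcases eq_or_ne (eLpNorm u p μ) 0 with hzero | hzero
  · simp [hzero]
  rw [← ENNReal.mul_le_mul_iff_right (a := eLpNorm u p μ ^ ((p : ℝ) - 2)) (by simp [hzero, htop])
    (ENNReal.rpow_ne_top_of_nonneg (sub_pos.2 hpR).le htop)]
  calc eLpNorm u p μ ^ ((p : ℝ) - 2) * eLpNorm u p μ ^ 2
      = eLpNorm u p μ ^ (p : ℝ) := by
        rw [← ENNReal.rpow_ofNat, ← ENNReal.rpow_add _ _ hzero htop, sub_add_cancel]
    _ = ∫⁻ x, ‖u x‖ₑ ^ (p : ℝ) ∂μ :=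
        eLpNorm_nnreal_pow_eq_lintegral (by rintro rfl; simp at hp)
    _ ≤ ENNReal.ofReal (p - 1) * (eLpNorm u p μ ^ ((p : ℝ) - 2) *
          (eLpNorm w q μ * eLpNorm u' r μ)) := by
        grw [lintegral_enorm_fderiv_rpow_le hw hc v hpR,
          lintegral_enorm_rpow_mul_le (q := q) (r := r) hu.continuous.aestronglyMeasurable
            hw.continuous.aestronglyMeasurable hu'.aestronglyMeasurable hp]
    _ ≤ p * (eLpNorm u p μ ^ ((p : ℝ) - 2) * (eLpNorm w q μ * eLpNorm u' r μ)) := by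
        gcongr
        rw [← ENNReal.ofReal_coe_nnreal]
        exact ENNReal.ofReal_le_ofReal (by linarith)
    _ = _ := by ring


end GagliardoNirenberg

section AlmostLogConvex

lemma le_pow_mul_add_of_sq_le_mul {c : ℕ → ℝ≥0∞} {K : ℝ≥0} (hK : 1 < K) {k : ℕ}
    (hc : ∀ j ≤ k, c j ≠ ⊤) (h : ∀ j, j + 1 < k → c (j + 1) ^ 2 ≤ K * (c j * c (j + 2))) {j : ℕ}
    (hj : j ≤ k) : c j ≤ K ^ k ^ 2 * (c 0 + c k) := by
  have hone (n : ℕ) : (1 : ℝ≥0∞) ≤ K ^ n := one_le_pow₀ (by exact_mod_cast hK.le)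
  -- The weight `K ^ j ^ 2` makes the sequence strictly log-convex, so its maximum is at an end.
  let e : ℕ → ℝ≥0∞ := fun j => K ^ j ^ 2 * c j
  have he (j : ℕ) (hj : j ≤ k) : e j ≠ ⊤ := ENNReal.mul_ne_top (by finiteness) (hc j hj)
  have hstrict (j : ℕ) (hj : j + 1 < k) : K * e (j + 1) ^ 2 ≤ e j * e (j + 2) := by
    calc K * e (j + 1) ^ 2 = K ^ (2 * (j + 1) ^ 2 + 1) * c (j + 1) ^ 2 := by ring
      _ ≤ K ^ (2 * (j + 1) ^ 2 + 1) * (K * (c j * c (j + 2))) := by gcongr; exact h j hj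
      _ = e j * e (j + 2) := by ring
  obtain ⟨m, hm, hmax⟩ := Finset.exists_max_image (Finset.range (k + 1)) e ⟨0, by simp⟩
  simp only [Finset.mem_range, Nat.lt_succ_iff] at hm hmax
  have hends : e m ≤ e 0 + e k := by
    rcases m with _ | n
    · exact le_self_add
    rcases hm.eq_or_lt with rfl | hlt
    · exact le_add_self
    have hle : K * e (n + 1) ^ 2 ≤ 1 * e (n + 1) ^ 2 := by
      rw [one_mul, sq (e (n + 1))]
      exact (sq (e (n + 1)) ▸ hstrict n hlt).trans
        (mul_le_mul' (hmax n (by omega)) (hmax (n + 2) (by omega)))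
    have hzero : e (n + 1) = 0 := by
      by_contra hne
      rw [ENNReal.mul_le_mul_iff_left (pow_ne_zero 2 hne) (ENNReal.pow_ne_top (he _ hm))] at hle
      exact hK.not_ge (by exact_mod_cast hle)
    simp [hzero]
  calc c j ≤ e j := le_mul_of_one_le_left' (hone _)
    _ ≤ e 0 + e k := (hmax j hj).trans hends
    _ ≤ K ^ k ^ 2 * (c 0 + c k) := by
      rw [mul_add]
      refine add_le_add_left (?_ : (K : ℝ≥0∞) ^ 0 ^ 2 * c 0 ≤ K ^ k ^ 2 * c 0) _
      simpa using le_mul_of_one_le_left' (hone _)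

end AlmostLogConvex

section MoserProduct

/-- The exponent `2k / j` of the Gagliardo–Nirenberg inequality for derivatives of order `j` in
terms of those of order `k`. For `k ≠ 0` it is `∞` at `j = 0`, since `2k / 0 = ∞` in `ℝ≥0∞`. -/
def gnExponent (k j : ℕ) : ℝ≥0∞ := 2 * k / j

lemma inv_gnExponent {k : ℕ} (hk : k ≠ 0) (j : ℕ) : (gnExponent k j)⁻¹ = j / (2 * k) :=
  ENNReal.inv_div (by simp) (by simp [hk])

lemma gnExponent_zero {k : ℕ} (hk : k ≠ 0) : gnExponent k 0 = ⊤ := by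
  simp [gnExponent, ENNReal.div_zero, hk]

lemma gnExponent_self {k : ℕ} (hk : k ≠ 0) : gnExponent k k = 2 :=
  ENNReal.mul_div_cancel_right (by simpa) (by simp)

lemma holderTriple_gnExponent {k : ℕ} (hk : k ≠ 0) (i j : ℕ) :
    (gnExponent k i).HolderTriple (gnExponent k j) (gnExponent k (i + j)) :=
  ⟨by simp only [inv_gnExponent hk, Nat.cast_add, ENNReal.add_div]⟩

lemma eLpNorm_bilin_le_mul {X E F G : Type*} [MeasurableSpace X] {μ : Measure X}
    [NormedAddCommGroup E] [NormedSpace ℝ E] [NormedAddCommGroup F] [NormedSpace ℝ F]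
    [NormedAddCommGroup G] [NormedSpace ℝ G] (B : E →L[ℝ] F →L[ℝ] G) (a b : ℝ≥0∞) {r : ℝ≥0∞}
    [a.HolderTriple b r] {f : X → E} {g : X → F} (hf : AEStronglyMeasurable f μ)
    (hg : AEStronglyMeasurable g μ) :
    eLpNorm (fun y => B (f y) (g y)) r μ ≤ ‖B‖ₑ * (eLpNorm f a μ * eLpNorm g b μ) := by
  rw [← mul_assoc]
  exact eLpNorm_le_eLpNorm_mul_eLpNorm_of_nnnorm hf hg (fun x y => B x y) ‖B‖₊
    (.of_forall fun y => B.le_opNorm₂ _ _)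

variable {d : ℕ} {F G H : Type*} [NormedAddCommGroup F] [InnerProductSpace ℝ F]
  [NormedAddCommGroup G] [InnerProductSpace ℝ G] [NormedAddCommGroup H] [NormedSpace ℝ H]
  {v : EuclideanSpace ℝ (Fin d) → F} {w : EuclideanSpace ℝ (Fin d) → G} {k j : ℕ}

lemma eLpNorm_pd_gnExponent_sq_le (hv : ContDiff ℝ 2 v) (hvc : HasCompactSupport v) (i : Fin d)
    (hjk : j + 1 < k) :
    eLpNorm (pd i v) (gnExponent k (j + 1)) volume ^ 2 ≤ (2 * k : ℝ≥0) *
      (eLpNorm v (gnExponent k j) volume *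
        eLpNorm (pd i (pd i v)) (gnExponent k (j + 2)) volume) := by
  have hp : ((2 * k / (j + 1) : ℝ≥0) : ℝ≥0∞) = gnExponent k (j + 1) := by
    rw [gnExponent, ENNReal.coe_div (by positivity)]
    push_cast
    rfl
  have hhalf : ((2 * k / (j + 1) / 2 : ℝ≥0) : ℝ≥0∞) = gnExponent k (j + (j + 2)) := by
    rw [gnExponent, div_div, ENNReal.coe_div (by positivity)]
    push_cast
    ring_nf
  have hholder : (gnExponent k j).HolderTriple (gnExponent k (j + 2))
      ((2 * k / (j + 1) / 2 : ℝ≥0) : ℝ≥0∞) :=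
    hhalf ▸ holderTriple_gnExponent (by omega) j (j + 2)
  rw [← hp]
  refine (eLpNorm_fderiv_sq_le hv hvc _ ?_ (q := gnExponent k j)
    (r := gnExponent k (j + 2))).trans ?_
  · rw [lt_div_iff₀ (by positivity)]
    gcongr
    exact_mod_cast hjk
  · gcongr
    · exact div_le_self (by positivity) (by simp)
    · exact le_rfl

/-- The largest `L^{2k/j}` norm of a derivative of order `j`, the quantity which the
Gagliardo–Nirenberg inequality interpolates. -/
def gnNorm (k j : ℕ) (v : EuclideanSpace ℝ (Fin d) → F) : ℝ≥0∞ :=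
  ⨆ l : List.Vector (Fin d) j, eLpNorm (wordDeriv l.1 v) (gnExponent k j) volume

lemma eLpNorm_wordDeriv_le_gnNorm (k : ℕ) {l : List (Fin d)} (hl : l.length = j)
    (v : EuclideanSpace ℝ (Fin d) → F) :
    eLpNorm (wordDeriv l v) (gnExponent k j) volume ≤ gnNorm k j v :=
  le_iSup (fun m : List.Vector (Fin d) j => eLpNorm (wordDeriv m.1 v) (gnExponent k j) volume)
    ⟨l, hl⟩

lemma gnNorm_zero_le (hk : k ≠ 0) (v : EuclideanSpace ℝ (Fin d) → F) :
    gnNorm k 0 v ≤ eLpNorm v ⊤ volume :=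
  iSup_le fun l => by rw [gnExponent_zero hk, List.length_eq_zero_iff.1 l.2, wordDeriv_nil]

lemma gnNorm_self_le (hk : k ≠ 0) {V : ℝ≥0∞}
    (hV : ∀ l : List (Fin d), l.length = k → eLpNorm (wordDeriv l v) 2 volume ≤ V) :
    gnNorm k k v ≤ V :=
  iSup_le fun l => by rw [gnExponent_self hk]; exact hV l.1 l.2

lemma gnNorm_ne_top (hv : ContDiff ℝ j v) (hvc : HasCompactSupport v) (k : ℕ) :
    gnNorm k j v ≠ ⊤ :=
  iSup_ne_top fun l => ((continuous_wordDeriv hv l.2.le).memLp_of_hasCompactSupport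
    (hasCompactSupport_wordDeriv hvc l.1)).eLpNorm_ne_top

lemma gnNorm_sq_le (hv : ContDiff ℝ k v) (hvc : HasCompactSupport v) (hjk : j + 1 < k) :
    gnNorm k (j + 1) v ^ 2 ≤ (2 * k : ℝ≥0) * (gnNorm k j v * gnNorm k (j + 2) v) := by
  rw [gnNorm, ENNReal.iSup_pow_of_ne_zero two_ne_zero]
  refine iSup_le fun ⟨l, hl⟩ => ?_
  obtain ⟨m, i, rfl⟩ := (List.eq_nil_or_concat' l).resolve_left (by rintro rfl; simp at hl)
  have hm : m.length = j := by simpa using hl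
  refine le_trans (b := eLpNorm (wordDeriv (m ++ [i]) v) (gnExponent k (j + 1)) volume ^ 2)
    le_rfl ?_
  rw [wordDeriv_append]
  refine (eLpNorm_pd_gnExponent_sq_le (contDiff_wordDeriv (m := 2) hv (by omega))
    (hasCompactSupport_wordDeriv hvc m) i hjk).trans ?_
  gcongr
  · exact eLpNorm_wordDeriv_le_gnNorm k hm v
  · simpa using eLpNorm_wordDeriv_le_gnNorm k (l := m ++ [i, i]) (j := j + 2) (by simp [hm]) v

/-- The constant of the Moser product estimate for `k` derivatives: `K ^ k ^ 2`, where `K = (2k)²`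
bounds the failure of log-convexity of the products of `gnNorm`s. -/
def moserConst (k : ℕ) : ℝ≥0 := ((2 * k) ^ 2) ^ k ^ 2

lemma gnNorm_mul_gnNorm_le (hv : ContDiff ℝ k v) (hvc : HasCompactSupport v)
    (hw : ContDiff ℝ k w) (hwc : HasCompactSupport w) (hk : k ≠ 0) (hj : j ≤ k) :
    gnNorm k j v * gnNorm k (k - j) w ≤ moserConst k *
      (gnNorm k 0 v * gnNorm k k w + gnNorm k k v * gnNorm k 0 w) := by
  have hK : (1 : ℝ≥0) < (2 * k) ^ 2 := by
    have : (1 : ℝ≥0) ≤ k := by exact_mod_cast Nat.one_le_iff_ne_zero.2 hk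
    exact one_lt_pow₀ (by linarith) two_ne_zero
  have hprod (j : ℕ) (hjk : j + 1 < k) :
      (gnNorm k (j + 1) v * gnNorm k (k - (j + 1)) w) ^ 2 ≤ ((2 * k) ^ 2 : ℝ≥0) *
        ((gnNorm k j v * gnNorm k (k - j) w) *
          (gnNorm k (j + 2) v * gnNorm k (k - (j + 2)) w)) := by
    obtain ⟨m, rfl⟩ : ∃ m, k = j + 2 + m := ⟨k - (j + 2), by omega⟩
    rw [show j + 2 + m - (j + 1) = m + 1 by omega, show j + 2 + m - j = m + 2 by omega,
      show j + 2 + m - (j + 2) = m by omega, mul_pow, ENNReal.coe_pow]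
    refine (mul_le_mul' (gnNorm_sq_le hv hvc hjk)
      (gnNorm_sq_le hw hwc (j := m) (by omega))).trans_eq ?_
    ring
  have hmain := le_pow_mul_add_of_sq_le_mul hK
    (c := fun j => gnNorm k j v * gnNorm k (k - j) w) (fun j hjk => ENNReal.mul_ne_top
      (gnNorm_ne_top (hv.of_le (by exact_mod_cast hjk)) hvc k)
      (gnNorm_ne_top (hw.of_le (by exact_mod_cast Nat.sub_le k j)) hwc k)) hprod hj
  simpa [moserConst] using hmain

lemma eLpNorm_bilin_wordDeriv_le_of_hasCompactSupport (B : F →L[ℝ] G →L[ℝ] H)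
    (hv : ContDiff ℝ k v) (hvc : HasCompactSupport v) (hw : ContDiff ℝ k w)
    (hwc : HasCompactSupport w) {p q : List (Fin d)} (hpq : p.length + q.length = k)
    {V W : ℝ≥0∞} (hV : ∀ l : List (Fin d), l.length = k → eLpNorm (wordDeriv l v) 2 volume ≤ V)
    (hW : ∀ l : List (Fin d), l.length = k → eLpNorm (wordDeriv l w) 2 volume ≤ W) :
    eLpNorm (fun y => B (wordDeriv p v y) (wordDeriv q w y)) 2 volume ≤
      moserConst k * ‖B‖ₑ * (eLpNorm v ⊤ volume * W + V * eLpNorm w ⊤ volume) := by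
  have hp : AEStronglyMeasurable (wordDeriv p v) volume :=
    (continuous_wordDeriv hv (by omega)).aestronglyMeasurable
  have hq : AEStronglyMeasurable (wordDeriv q w) volume :=
    (continuous_wordDeriv hw (by omega)).aestronglyMeasurable
  rw [mul_comm (moserConst k : ℝ≥0∞), mul_assoc]
  rcases eq_or_ne k 0 with rfl | hk
  · obtain ⟨rfl, rfl⟩ : p = [] ∧ q = [] := by simpa using hpq
    refine (eLpNorm_bilin_le_mul B ⊤ 2 hp hq).trans (mul_le_mul_right ?_ _)
    calc eLpNorm v ⊤ volume * eLpNorm w 2 volume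
        ≤ eLpNorm v ⊤ volume * W + V * eLpNorm w ⊤ volume :=
          le_add_right (mul_le_mul_right (hW [] rfl) _)
      _ = _ := by simp [moserConst]
  · have : (gnExponent k p.length).HolderTriple (gnExponent k q.length) 2 := by
      simpa only [hpq, gnExponent_self hk] using holderTriple_gnExponent hk p.length q.length
    refine (eLpNorm_bilin_le_mul B (gnExponent k p.length) (gnExponent k q.length) hp hq).trans
      (mul_le_mul_right ?_ _)
    calc eLpNorm (wordDeriv p v) (gnExponent k p.length) volume *
          eLpNorm (wordDeriv q w) (gnExponent k q.length) volume
        ≤ gnNorm k p.length v * gnNorm k (k - p.length) w := by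
          rw [show k - p.length = q.length by omega]
          exact mul_le_mul' (eLpNorm_wordDeriv_le_gnNorm k rfl v)
            (eLpNorm_wordDeriv_le_gnNorm k rfl w)
      _ ≤ moserConst k * (gnNorm k 0 v * gnNorm k k w + gnNorm k k v * gnNorm k 0 w) :=
          gnNorm_mul_gnNorm_le hv hvc hw hwc hk (by omega)
      _ ≤ _ := by
          gcongr
          · exact gnNorm_zero_le hk v
          · exact gnNorm_self_le hk hW
          · exact gnNorm_self_le hk hV
          · exact gnNorm_zero_le hk w

end MoserProduct

section UniformlyLocal

variable {d : ℕ} {F : Type*} [NormedAddCommGroup F] [NormedSpace ℝ F]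
  {u : EuclideanSpace ℝ (Fin d) → F} {k : ℕ}

/-- The largest uniformly local `L²` norm of a derivative of order at most `k`, words taking the
place of the multi-indices of `ulSobolev`. -/
def ulWordNorm (k : ℕ) (u : EuclideanSpace ℝ (Fin d) → F) : ℝ≥0∞ :=
  ⨆ (l : List (Fin d)) (_ : l.length ≤ k) (x : EuclideanSpace ℝ (Fin d)),
    eLpNorm (wordDeriv l u) 2 (volume.restrict (ball x 1))

lemma eLpNorm_wordDeriv_le_ulWordNorm {l : List (Fin d)} (hl : l.length ≤ k)
    (u : EuclideanSpace ℝ (Fin d) → F) (x : EuclideanSpace ℝ (Fin d)) :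
    eLpNorm (wordDeriv l u) 2 (volume.restrict (ball x 1)) ≤ ulWordNorm k u :=
  le_iSup₂_of_le l hl (le_iSup (fun x => eLpNorm (wordDeriv l u) 2 (volume.restrict (ball x 1))) x)

lemma ulWordNorm_mono {m : ℕ} (h : k ≤ m) (u : EuclideanSpace ℝ (Fin d) → F) :
    ulWordNorm k u ≤ ulWordNorm m u :=
  iSup₂_le fun _ hl => iSup_le fun x => eLpNorm_wordDeriv_le_ulWordNorm (hl.trans h) u x

lemma ulWordNorm_pd_le (k : ℕ) (i : Fin d) (u : EuclideanSpace ℝ (Fin d) → F) :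
    ulWordNorm k (pd i u) ≤ ulWordNorm (k + 1) u :=
  iSup₂_le fun l hl => iSup_le fun x =>
    eLpNorm_wordDeriv_le_ulWordNorm (l := i :: l) (by simpa using hl) u x

lemma ulWordNorm_le_ulSobolev (hu : ContDiff ℝ k u) : ulWordNorm k u ≤ ulSobolev d k u := by
  refine iSup₂_le fun l hl => iSup_le fun x => ?_
  obtain ⟨α, hα, hD⟩ := exists_Dm_eq_wordDeriv (l := l) (hu.of_le (by exact_mod_cast hl))
  have hmem : α ∈ mSet d k := by
    refine Finset.mem_filter.2 ⟨Finset.mem_Iic.2 fun i => ?_, hα.trans_le hl⟩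
    exact (Finset.single_le_sum_of_canonicallyOrdered (Finset.mem_univ i)).trans (hα.trans_le hl)
  rw [← hD]
  exact (le_iSup (fun x => eLpNorm (Dm α u) 2 (volume.restrict (ball x 1))) x).trans
    (Finset.single_le_sum_of_canonicallyOrdered (f := fun α => ⨆ x : EuclideanSpace ℝ (Fin d),
      eLpNorm (Dm α u) 2 (volume.restrict (ball x 1))) hmem)

end UniformlyLocal

section Localization

lemma eLpNorm_restrict_biUnion_le {X ι F : Type*} [MeasurableSpace X] [NormedAddCommGroup F]
    {μ : Measure X} {p : ℝ≥0∞} (hp : 1 ≤ p) {f : X → F} (hf : AEStronglyMeasurable f μ)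
    {t : Finset ι} {S : ι → Set X} (hS : ∀ i ∈ t, MeasurableSet (S i)) :
    eLpNorm f p (μ.restrict (⋃ i ∈ t, S i)) ≤ ∑ i ∈ t, eLpNorm f p (μ.restrict (S i)) := by
  rw [← eLpNorm_indicator_eq_eLpNorm_restrict (t.measurableSet_biUnion hS)]
  calc eLpNorm ((⋃ i ∈ t, S i).indicator f) p μ
      ≤ eLpNorm (∑ i ∈ t, (S i).indicator fun z => ‖f z‖) p μ := by
        refine eLpNorm_mono_real fun z => ?_
        have hnonneg : ∀ i ∈ t, 0 ≤ (S i).indicator (fun z => ‖f z‖) z :=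
          fun i _ => indicator_nonneg (fun _ _ => norm_nonneg _) z
        rw [Finset.sum_apply]
        by_cases hz : z ∈ ⋃ i ∈ t, S i
        · obtain ⟨i, hi, hzi⟩ := mem_iUnion₂.1 hz
          rw [indicator_of_mem hz]
          exact (indicator_of_mem hzi _).ge.trans (Finset.single_le_sum hnonneg hi)
        · rw [indicator_of_notMem hz, norm_zero]
          exact Finset.sum_nonneg hnonneg
    _ ≤ ∑ i ∈ t, eLpNorm ((S i).indicator fun z => ‖f z‖) p μ :=
        eLpNorm_sum_le (fun i hi => hf.norm.indicator (hS i hi)) hp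
    _ = ∑ i ∈ t, eLpNorm f p (μ.restrict (S i)) :=
        Finset.sum_congr rfl fun i hi => by
          rw [eLpNorm_indicator_eq_eLpNorm_restrict (hS i hi), eLpNorm_norm]

lemma exists_closedBall_subset_biUnion_ball (E : Type*) [NormedAddCommGroup E] [ProperSpace E]
    (R : ℝ) {r : ℝ} (hr : 0 < r) :
    ∃ t : Finset E, ∀ x, closedBall x R ⊆ ⋃ y ∈ t, ball (x + y) r := by
  obtain ⟨t, -, htfin, ht⟩ := finite_cover_balls_of_compact (isCompact_closedBall (0 : E) R) hr
  lift t to Finset E using htfin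
  refine ⟨t, fun x z hz => ?_⟩
  obtain ⟨y, hy, hzy⟩ := mem_iUnion₂.1 (ht (a := z - x) (by simpa [dist_eq_norm] using hz))
  refine mem_iUnion₂.2 ⟨y, hy, ?_⟩
  rwa [mem_ball, dist_eq_norm, ← sub_sub, ← dist_eq_norm]

variable {d k : ℕ} {M : ℝ≥0} {x : EuclideanSpace ℝ (Fin d)} {χ : EuclideanSpace ℝ (Fin d) → ℝ}
  {F : Type*} [NormedAddCommGroup F] [NormedSpace ℝ F] {u : EuclideanSpace ℝ (Fin d) → F}

lemma eLpNorm_wordDeriv_restrict_le_card_mul (hu : ContDiff ℝ k u)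
    {S : Set (EuclideanSpace ℝ (Fin d))} {t : Finset (EuclideanSpace ℝ (Fin d))}
    (ht : S ⊆ ⋃ y ∈ t, ball (x + y) 1) {l : List (Fin d)} (hl : l.length ≤ k) :
    eLpNorm (wordDeriv l u) 2 (volume.restrict S) ≤ t.card * ulWordNorm k u := by
  calc eLpNorm (wordDeriv l u) 2 (volume.restrict S)
      ≤ eLpNorm (wordDeriv l u) 2 (volume.restrict (⋃ y ∈ t, ball (x + y) 1)) :=
        eLpNorm_mono_measure _ (Measure.restrict_mono ht le_rfl)
    _ ≤ ∑ y ∈ t, eLpNorm (wordDeriv l u) 2 (volume.restrict (ball (x + y) 1)) :=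
        eLpNorm_restrict_biUnion_le (by norm_num)
          (continuous_wordDeriv hu hl).aestronglyMeasurable fun _ _ => measurableSet_ball
    _ ≤ ∑ _y ∈ t, ulWordNorm k u :=
        Finset.sum_le_sum fun y _ => eLpNorm_wordDeriv_le_ulWordNorm hl u _
    _ = t.card * ulWordNorm k u := by simp

/-- `χ` is a cutoff function of class `C^k` adapted to the unit ball about `x`, with derivatives of
order at most `k` bounded by `M`. Estimates over unit balls reduce to estimates for compactly
supported functions by multiplication with such a `χ`. -/
structure IsCutoffAt (k : ℕ) (M : ℝ≥0) (x : EuclideanSpace ℝ (Fin d))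
    (χ : EuclideanSpace ℝ (Fin d) → ℝ) : Prop where
  contDiff : ContDiff ℝ k χ
  tsupport_subset : tsupport χ ⊆ closedBall x 2
  eqOn_one : EqOn χ 1 (ball x 1)
  norm_le_one : ∀ y, ‖χ y‖ ≤ 1
  norm_wordDeriv_le : ∀ l : List (Fin d), l.length ≤ k → ∀ y, ‖wordDeriv l χ y‖ ≤ M

lemma exists_isCutoffAt (d k : ℕ) :
    ∃ M : ℝ≥0, ∀ x : EuclideanSpace ℝ (Fin d), ∃ χ, IsCutoffAt k M x χ := by
  let φ : ContDiffBump (0 : EuclideanSpace ℝ (Fin d)) := ⟨1, 2, one_pos, by norm_num⟩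
  have hφ : ContDiff ℝ k φ := φ.contDiff
  have hbdd : ∀ l ∈ {l : List (Fin d) | l.length ≤ k}, ∃ M : ℝ≥0, ∀ y, ‖wordDeriv l φ y‖ ≤ M := by
    intro l hl
    obtain ⟨M, hM⟩ := (hasCompactSupport_wordDeriv φ.hasCompactSupport l).exists_bound_of_continuous
      (continuous_wordDeriv hφ hl)
    exact ⟨M.toNNReal, fun y => (hM y).trans M.le_coe_toNNReal⟩
  choose! M hM using hbdd
  obtain ⟨M₀, hM₀⟩ := ((List.finite_length_le (Fin d) k).image M).bddAbove
  refine ⟨M₀, fun x => ⟨fun y => φ (y - x), hφ.comp (contDiff_id.sub contDiff_const), ?_,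
    fun y hy => ?_, fun y => ?_, fun l hl y => ?_⟩⟩
  · refine closure_minimal (fun y hy => ?_) isClosed_closedBall
    have hmem : y - x ∈ Function.support φ := hy
    rw [φ.support_eq] at hmem
    exact ball_subset_closedBall (by simpa [dist_eq_norm, φ] using hmem)
  · refine φ.one_of_mem_closedBall (ball_subset_closedBall ?_)
    simpa [dist_eq_norm, φ] using hy
  · rw [Real.norm_of_nonneg φ.nonneg]
    exact φ.le_one
  · rw [wordDeriv_comp_sub]
    exact (hM l hl _).trans (by exact_mod_cast hM₀ ⟨l, hl, rfl⟩)

namespace IsCutoffAt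

lemma hasCompactSupport_smul (hχ : IsCutoffAt k M x χ) (u : EuclideanSpace ℝ (Fin d) → F) :
    HasCompactSupport fun y => χ y • u y :=
  HasCompactSupport.smul_right <|
    (isCompact_closedBall x 2).of_isClosed_subset (isClosed_tsupport _) hχ.tsupport_subset

lemma wordDeriv_smul_eqOn (hχ : IsCutoffAt k M x χ) (u : EuclideanSpace ℝ (Fin d) → F)
    (l : List (Fin d)) :
    EqOn (wordDeriv l fun y => χ y • u y) (wordDeriv l u) (ball x 1) :=
  wordDeriv_eqOn isOpen_ball (fun y hy => by simp [hχ.eqOn_one hy]) l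

lemma eLpNorm_smul_le (hχ : IsCutoffAt k M x χ) (u : EuclideanSpace ℝ (Fin d) → F) :
    eLpNorm (fun y => χ y • u y) ⊤ volume ≤ eLpNorm u ⊤ volume :=
  eLpNorm_mono fun y => by
    rw [norm_smul]
    exact mul_le_of_le_one_left (norm_nonneg _) (hχ.norm_le_one y)

lemma eLpNorm_wordDeriv_smul_le (hχ : IsCutoffAt k M x χ) (hu : ContDiff ℝ k u)
    {t : Finset (EuclideanSpace ℝ (Fin d))} (ht : closedBall x 2 ⊆ ⋃ y ∈ t, ball (x + y) 1)
    {l : List (Fin d)} (hl : l.length ≤ k) :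
    eLpNorm (wordDeriv l fun y => χ y • u y) 2 volume ≤
      2 ^ k * (M * (t.card * ulWordNorm k u)) := by
  have hsupp : Function.support (wordDeriv l fun y => χ y • u y) ⊆ closedBall x 2 :=
    (subset_tsupport _).trans <| (tsupport_wordDeriv_subset l _).trans <|
      (tsupport_smul_subset_left χ u).trans hχ.tsupport_subset
  have hle : (l.length : WithTop ℕ∞) ≤ k := by exact_mod_cast hl
  rw [← eLpNorm_restrict_eq_of_support_subset hsupp]
  refine (eLpNorm_wordDeriv_bilin_le (ContinuousLinearMap.lsmul ℝ ℝ) (by norm_num)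
    (hχ.contDiff.of_le hle) (hu.of_le hle) (A := M * (t.card * ulWordNorm k u))
    fun p q hpq => ?_).trans ?_
  · refine (eLpNorm_le_mul_eLpNorm_of_ae_le_mul (c := M) (g := wordDeriv q u)
      (.of_forall fun y => ?_) 2).trans ?_
    · simp only [ContinuousLinearMap.lsmul_apply, norm_smul]
      gcongr
      exact hχ.norm_wordDeriv_le p (by omega) y
    · rw [ENNReal.ofReal_coe_nnreal]
      gcongr
      exact eLpNorm_wordDeriv_restrict_le_card_mul hu ht (by omega)
  · gcongr
    exact one_le_two

end IsCutoffAt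

end Localization

section Moser

variable {d k : ℕ} {F G H : Type*} [NormedAddCommGroup F] [InnerProductSpace ℝ F]
  [NormedAddCommGroup G] [InnerProductSpace ℝ G] [NormedAddCommGroup H] [NormedSpace ℝ H]

lemma exists_eLpNorm_bilin_wordDeriv_le (d k : ℕ) :
    ∃ C : ℝ≥0, ∀ (B : F →L[ℝ] G →L[ℝ] H) (v : EuclideanSpace ℝ (Fin d) → F)
      (w : EuclideanSpace ℝ (Fin d) → G), ContDiff ℝ k v → ContDiff ℝ k w →
      ∀ p q : List (Fin d), p.length + q.length = k → ∀ x : EuclideanSpace ℝ (Fin d),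
        eLpNorm (fun y => B (wordDeriv p v y) (wordDeriv q w y)) 2 (volume.restrict (ball x 1)) ≤
          C * ‖B‖ₑ * (eLpNorm v ⊤ volume * ulWordNorm k w +
            ulWordNorm k v * eLpNorm w ⊤ volume) := by
  obtain ⟨t, ht⟩ := exists_closedBall_subset_biUnion_ball (EuclideanSpace ℝ (Fin d)) 2 one_pos
  obtain ⟨M, hM⟩ := exists_isCutoffAt d k
  refine ⟨moserConst k * (2 ^ k * (M * t.card)), fun B v w hv hw p q hpq x => ?_⟩
  obtain ⟨χ, hχ⟩ := hM x
  calc eLpNorm (fun y => B (wordDeriv p v y) (wordDeriv q w y)) 2 (volume.restrict (ball x 1))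
      = eLpNorm (fun y => B (wordDeriv p (fun z => χ z • v z) y)
          (wordDeriv q (fun z => χ z • w z) y)) 2 (volume.restrict (ball x 1)) := by
        refine eLpNorm_congr_ae ?_
        filter_upwards [ae_restrict_mem measurableSet_ball] with y hy
        rw [hχ.wordDeriv_smul_eqOn v p hy, hχ.wordDeriv_smul_eqOn w q hy]
    _ ≤ eLpNorm (fun y => B (wordDeriv p (fun z => χ z • v z) y)
          (wordDeriv q (fun z => χ z • w z) y)) 2 volume :=
        eLpNorm_mono_measure _ Measure.restrict_le_self
    _ ≤ moserConst k * ‖B‖ₑ * (eLpNorm (fun z => χ z • v z) ⊤ volume *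
          (2 ^ k * (M * (t.card * ulWordNorm k w))) +
            2 ^ k * (M * (t.card * ulWordNorm k v)) * eLpNorm (fun z => χ z • w z) ⊤ volume) :=
        eLpNorm_bilin_wordDeriv_le_of_hasCompactSupport B (hχ.contDiff.smul hv)
          (hχ.hasCompactSupport_smul v) (hχ.contDiff.smul hw) (hχ.hasCompactSupport_smul w) hpq
          (fun _ hl => hχ.eLpNorm_wordDeriv_smul_le hv (ht x) hl.le)
          fun _ hl => hχ.eLpNorm_wordDeriv_smul_le hw (ht x) hl.le
    _ ≤ moserConst k * ‖B‖ₑ * (eLpNorm v ⊤ volume * (2 ^ k * (M * (t.card * ulWordNorm k w))) +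
          2 ^ k * (M * (t.card * ulWordNorm k v)) * eLpNorm w ⊤ volume) := by
        gcongr
        · exact hχ.eLpNorm_smul_le v
        · exact hχ.eLpNorm_smul_le w
    _ = _ := by
        push_cast
        ring

lemma exists_eLpNorm_bilin_wordDeriv_cons_le (d k : ℕ) :
    ∃ C : ℝ≥0, ∀ (B : F →L[ℝ] G →L[ℝ] H) (f : EuclideanSpace ℝ (Fin d) → F)
      (g : EuclideanSpace ℝ (Fin d) → G), ContDiff ℝ (k + 1) f → ContDiff ℝ k g →
      ∀ (i : Fin d) (p q : List (Fin d)), p.length + q.length = k →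
      ∀ x : EuclideanSpace ℝ (Fin d),
        eLpNorm (fun y => B (wordDeriv (i :: p) f y) (wordDeriv q g y)) 2
          (volume.restrict (ball x 1)) ≤
          C * ‖B‖ₑ * (eLpNorm (fderiv ℝ f) ⊤ volume * ulWordNorm k g +
            eLpNorm g ⊤ volume * ulWordNorm (k + 1) f) := by
  obtain ⟨C, hC⟩ := exists_eLpNorm_bilin_wordDeriv_le (F := F) (G := G) (H := H) d k
  refine ⟨C, fun B f g hf hg i p q hpq x => ?_⟩
  refine (hC B (pd i f) g (contDiff_pd hf le_rfl i) hg p q hpq x).trans ?_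
  rw [mul_comm (ulWordNorm k _)]
  gcongr
  · exact eLpNorm_mono fun y => ((fderiv ℝ f y).le_opNorm _).trans_eq (by simp)
  · exact ulWordNorm_pd_le k i f

theorem moser_commutator_general (d s : ℕ) :
    ∃ C : ℝ≥0, ∀ (B : F →L[ℝ] G →L[ℝ] H) (f : EuclideanSpace ℝ (Fin d) → F)
      (g : EuclideanSpace ℝ (Fin d) → G), ContDiff ℝ s f → ContDiff ℝ s g →
      ∀ α : Fin d → ℕ, ∑ i, α i ≤ s →
        ⨆ x : EuclideanSpace ℝ (Fin d),
            eLpNorm (fun y => Dm α (fun z => B (f z) (g z)) y - B (f y) (Dm α g y)) 2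
              (volume.restrict (ball x 1)) ≤
          C * ‖B‖ₑ * (eLpNorm (fderiv ℝ f) ⊤ volume * ulSobolev d (s - 1) g +
            eLpNorm g ⊤ volume * ulSobolev d s f) := by
  choose C hC using exists_eLpNorm_bilin_wordDeriv_cons_le (F := F) (G := G) (H := H) d
  refine ⟨2 ^ s * ∑ k ∈ Finset.range s, C k, fun B f g hf hg α hα => iSup_le fun x => ?_⟩
  have hlen : (multiWord α).length ≤ s := (length_multiWord α).trans_le hα
  have hle : ((multiWord α).length : WithTop ℕ∞) ≤ s := by exact_mod_cast hlen
  simp only [Dm_eq_wordDeriv]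
  refine (eLpNorm_wordDeriv_bilin_sub_le B (by norm_num) (hf.of_le hle) (hg.of_le hle)
    (A := (∑ k ∈ Finset.range s, C k : ℝ≥0) * ‖B‖ₑ * (eLpNorm (fderiv ℝ f) ⊤ volume *
      ulSobolev d (s - 1) g + eLpNorm g ⊤ volume * ulSobolev d s f)) fun p q hp hpq => ?_).trans ?_
  · obtain ⟨i, p, rfl⟩ := List.exists_cons_of_ne_nil hp
    have hks : p.length + q.length + 1 ≤ s := by simp at hpq; omega
    refine (hC (p.length + q.length) B f g (hf.of_le (by exact_mod_cast hks))
      (hg.of_le (by exact_mod_cast (by omega))) i p q rfl x).trans ?_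
    gcongr
    · exact Finset.single_le_sum_of_canonicallyOrdered (f := C) (by simpa using hks)
    · exact (ulWordNorm_mono (by omega) g).trans
        (ulWordNorm_le_ulSobolev (hg.of_le (by exact_mod_cast Nat.sub_le s 1)))
    · exact (ulWordNorm_mono hks f).trans (ulWordNorm_le_ulSobolev hf)
  · push_cast
    rw [mul_assoc (2 ^ s : ℝ≥0∞), mul_assoc (2 ^ s : ℝ≥0∞)]
    gcongr
    exact one_le_two

end Moser

/-- **Lemma 2.8(iii) of the paper**: the commutator estimate
`‖D^α(fg) − f D^α g‖_{L²_ul} ≤ C (‖f‖_{C̃¹} ‖g‖_{H^{s−1}_ul} + ‖g‖_{L^∞} ‖f‖_{H^s_ul})`. -/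
theorem moser_commutator (d : ℕ) (hd : 1 ≤ d) (s : ℕ) (hs : 1 ≤ s) :
    ∃ C : ℝ, 0 < C ∧
      ∀ f g : EuclideanSpace ℝ (Fin d) → ℝ, ContDiff ℝ (⊤ : ℕ∞) f → ContDiff ℝ (⊤ : ℕ∞) g →
        ∀ α : Fin d → ℕ, (∑ i, α i) ≤ s →
          (⨆ x : EuclideanSpace ℝ (Fin d),
              eLpNorm (fun y => Dm α (fun z => f z * g z) y - f y * Dm α g y) 2
                (volume.restrict (ball x 1)))
            ≤ ENNReal.ofReal C *
              ((eLpNorm f ⊤ volume + eLpNorm (fun x => fderiv ℝ f x) ⊤ volume)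
                  * ulSobolev d (s - 1) g
                + eLpNorm g ⊤ volume * ulSobolev d s f) := by
  obtain ⟨C, hC⟩ := moser_commutator_general (F := ℝ) (G := ℝ) (H := ℝ) d s
  refine ⟨C + 1, by positivity, fun f g hf hg α hα =>
    (hC (ContinuousLinearMap.mul ℝ ℝ) f g (hf.of_le (by exact_mod_cast le_top))
      (hg.of_le (by exact_mod_cast le_top)) α hα).trans ?_⟩
  gcongr
  · rw [← NNReal.coe_one, ← NNReal.coe_add, ENNReal.ofReal_coe_nnreal]
    simp [enorm_eq_nnnorm]
  · exact le_add_self
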